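/- Let T > 0 and ε > 0. Suppose ρ : ℝ → ℝ is differentiable and σ : ℝ → ℝ is continuously differentiable, both are periodic with period T, ρ(t) > 0 for all t ∈ ℝ, the derivative of ρ satisfies ρ'(t) = 2σ(t)ρ(t) for all t ∈ ℝ, and σ'(t) < 0 for every t with ρ(t) ≤ ε. Then ρ(t) > ε for all t ∈ ℝ. (This is the strict-convexity argument showing that a closed geodesic of an asymptotically complex hyperbolic metric cannot enter the collar region {ρ ≤ ε} near the boundary at infinity: along the geodesic flow one has ρ̇ = 2σρ and σ̇ < 0 where ρ is small, so ρ∘γ would have an interior minimum with negative second derivative, a contradiction.) -/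

import Mathlib

/-- Strict convexity of the boundary defining function along closed geodesics near
infinity: let `T > 0` and `ε > 0`, let `ρ : ℝ → ℝ` be differentiable and `σ : ℝ → ℝ` be
continuously differentiable, both `T`-periodic, with `ρ > 0` everywhere, satisfying the
Hamiltonian equation `ρ' = 2σρ`, and with `σ' < 0` wherever `ρ ≤ ε`.  Then `ρ > ε`
everywhere: a closed geodesic of an asymptotically complex hyperbolic metric cannot
enter the collar region `{ρ ≤ ε}` near the boundary at infinity. -/
theorem closed_geodesic_avoids_collar (T ε : ℝ) (hT : 0 < T) (hε : 0 < ε)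
    (ρ σ : ℝ → ℝ)
    (hρdiff : Differentiable ℝ ρ) (hσdiff : ContDiff ℝ 1 σ)
    (hρper : Function.Periodic ρ T) (hσper : Function.Periodic σ T)
    (hρpos : ∀ t, 0 < ρ t)
    (hode : ∀ t, deriv ρ t = 2 * σ t * ρ t)
    (hconv : ∀ t, ρ t ≤ ε → deriv σ t < 0) :
    ∀ t, ε < ρ t := by
  intro t
  by_contra hlt
  have hlt := not_lt.mp hlt
  obtain ⟨_, ⟨m, rfl⟩, hm⟩ := (hρper.compact_of_continuous hT.ne' hρdiff.continuous).exists_isLeast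
    (Set.range_nonempty ρ)
  have hmin : ∀ x, ρ m ≤ ρ x := fun x => hm ⟨x, rfl⟩
  have hlmin : IsLocalMin ρ m := Filter.Eventually.of_forall hmin
  have hd0 : deriv ρ m = 0 := hlmin.deriv_eq_zero
  have hσ' := hconv m ((hmin t).trans hlt)
  have hdd : HasDerivAt (deriv ρ) (2 * deriv σ m * ρ m + 2 * σ m * deriv ρ m) m := by
    rw [show deriv ρ = fun t => 2 * σ t * ρ t from funext hode]
    have h1 : HasDerivAt σ (deriv σ m) m := (hσdiff.differentiable (by norm_num) m).hasDerivAt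
    have h2 : HasDerivAt ρ (deriv ρ m) m := (hρdiff m).hasDerivAt
    rw [hode m] at h2
    exact (h1.const_mul 2).mul h2
  have hneg : deriv (deriv ρ) m < 0 := by
    rw [hdd.deriv, hd0]
    nlinarith [mul_pos (neg_pos.mpr hσ') (hρpos m)]
  have hlmax : IsLocalMax ρ m :=
    isLocalMax_of_deriv_deriv_neg hneg hd0 hρdiff.continuous.continuousAt
  have heq : ρ =ᶠ[nhds m] fun _ => ρ m := by
    filter_upwards [hlmax] with x hx using le_antisymm hx (hmin x)
  have h3 := heq.deriv.deriv_eq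
  simp at h3
  linarith
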